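/- Let K be an algebraically closed field, r ≥ 1 an integer, and n_1, …, n_r ≥ 1 integers. Let R_X be the polynomial ring over K in the variables T_∞ and _sT_{ij} for s = 1, …, r and 0 ≤ i < j ≤ n_s + 2 with i ≤ n_s, and let I_X = I(1) + … + I(r) be the ideal generated, for each s, by the twisted Plücker relations _sT_{ij}·T_∞ − _sT_{i,n_s+1}·_sT_{j,n_s+2} + _sT_{i,n_s+2}·_sT_{j,n_s+1} (0 ≤ i < j ≤ n_s) and the Plücker relations _sT_{ij}·_sT_{kl} − _sT_{ik}·_sT_{jl} + _sT_{il}·_sT_{jk} (0 ≤ i < j < k < l ≤ n_s + 2, k ≤ n_s). Then the ideal I_X + ⟨T_∞⟩ is a prime ideal of R_X. -/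

import Mathlib

open MvPolynomial

/-- The index set of the polynomial ring `R_X` in the variables `T_∞` (the
index `none`) and `_sT_{ij}` for `s = 1,…,r` and `0 ≤ i < j ≤ n_s + 2` with
`i ≤ n_s`. -/
abbrev IdxX (r : ℕ) (n : Fin r → ℕ) : Type :=
  Option (Σ s : Fin r, {p : ℕ × ℕ // p.1 < p.2 ∧ p.2 ≤ n s + 2 ∧ p.1 ≤ n s})

/-- The variable `T_∞`. -/
noncomputable def Tinf (K : Type*) [Field K] (r : ℕ) (n : Fin r → ℕ) :
    MvPolynomial (IdxX r n) K := X none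

/-- The variable `_sT_{ab}` (junk value `0` for invalid index pairs). -/
noncomputable def T (K : Type*) [Field K] (r : ℕ) (n : Fin r → ℕ)
    (s : Fin r) (a b : ℕ) : MvPolynomial (IdxX r n) K :=
  if h : a < b ∧ b ≤ n s + 2 ∧ a ≤ n s then X (some ⟨s, ⟨(a, b), h⟩⟩) else 0

/-- The ideal `I_X = I(1) + … + I(r)` where `I(s)` is generated by the twisted
Plücker relations
`_sT_{ij}·T_∞ − _sT_{i,n_s+1}·_sT_{j,n_s+2} + _sT_{i,n_s+2}·_sT_{j,n_s+1}`
(`0 ≤ i < j ≤ n_s`) and the Plücker relations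
`_sT_{ij}·_sT_{kl} − _sT_{ik}·_sT_{jl} + _sT_{il}·_sT_{jk}`
(`0 ≤ i < j < k < l ≤ n_s + 2`, `k ≤ n_s`). -/
noncomputable def IX (K : Type*) [Field K] (r : ℕ) (n : Fin r → ℕ) :
    Ideal (MvPolynomial (IdxX r n) K) :=
  Ideal.span {x : MvPolynomial (IdxX r n) K | ∃ s : Fin r,
    (∃ i j : ℕ, i < j ∧ j ≤ n s ∧
      x = T K r n s i j * Tinf K r n
        - T K r n s i (n s + 1) * T K r n s j (n s + 2)
        + T K r n s i (n s + 2) * T K r n s j (n s + 1)) ∨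
    (∃ i j k l : ℕ, i < j ∧ j < k ∧ k < l ∧ l ≤ n s + 2 ∧ k ≤ n s ∧
      x = T K r n s i j * T K r n s k l - T K r n s i k * T K r n s j l
        + T K r n s i l * T K r n s j k)}

/-!
`T_∞` plays the role of the missing Plücker coordinate `_sT_{n_s+1,n_s+2}`: with this reading the
twisted relations become ordinary Plücker relations. Modulo `T_∞` they hold for the maximal minors
of a generic `2 × (n_s + 3)` matrix whose last two top entries are `0`, and `I_X + ⟨T_∞⟩` turns out
to be the kernel of the resulting map into a polynomial ring. The Plücker relations rewrite every
monomial, modulo the ideal, as a combination of standard ones (no two column pairs of a block are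
strictly nested). The images of distinct standard monomials have distinct leading exponents, because
a chain of pairs is determined by its two marginals; hence no nonzero combination of standard
monomials lies in the kernel.
-/

namespace TwistedPlucker

section Straightening

variable {σ R : Type*} [CommSemiring R]

lemma single_add_single_le {m : σ →₀ ℕ} {x y : σ} (hxy : x ≠ y) (hx : m x ≠ 0)
    (hy : m y ≠ 0) : Finsupp.single x 1 + Finsupp.single y 1 ≤ m := by
  classical
  intro z
  simp only [Finsupp.add_apply, Finsupp.single_apply]
  grind

lemma monomial_single_add_single_add (m : σ →₀ ℕ) (x y : σ) :
    monomial (Finsupp.single x 1 + Finsupp.single y 1 + m) (1 : R) =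
      X x * X y * monomial m 1 := by
  simp [X, monomial_mul]

lemma sup_restrictSupport_eq_top_of_straightening (I : Submodule R (MvPolynomial σ R))
    (S : Set (σ →₀ ℕ)) {ω : Type*} [LT ω] [WellFoundedLT ω] (weight : (σ →₀ ℕ) → ω)
    (straighten : ∀ m ∉ S, monomial m 1 ∈ I ⊔ restrictSupport R {m' | weight m' < weight m}) :
    I ⊔ restrictSupport R S = ⊤ := by
  have monomial_mem (m : σ →₀ ℕ) : monomial m (1 : R) ∈ I ⊔ restrictSupport R S := by
    induction hw : weight m using WellFoundedLT.induction generalizing m with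
    | _ w ih =>
      by_cases hm : m ∈ S
      · exact Submodule.mem_sup_right ((monomial_mem_restrictSupport R).2 (Or.inl hm))
      · have smaller_le : restrictSupport R {m' | weight m' < weight m} ≤
            I ⊔ restrictSupport R S := by
          rw [restrictSupport_eq_span, Submodule.span_le]
          rintro _ ⟨m', hm', rfl⟩
          exact ih _ (hw ▸ hm') m' rfl
        exact sup_le le_sup_left smaller_le (straighten m hm)
  rw [eq_top_iff, ← restrictSupport_univ, restrictSupport_eq_span, Submodule.span_le]
  rintro _ ⟨m, -, rfl⟩
  exact monomial_mem m

end Straightening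

section LeadingExponents

open scoped MonomialOrder

variable {ι σ τ R : Type*} [CommRing R] [NoZeroDivisors R] (o : MonomialOrder τ)

lemma linearIndepOn_of_injOn_degree (f : ι → MvPolynomial τ R) (S : Set ι)
    (hf : ∀ i ∈ S, f i ≠ 0) (hdeg : S.InjOn fun i => o.degree (f i)) : LinearIndepOn R f S := by
  rw [linearIndepOn_iff]
  intro c hc hsum
  by_contra hne
  obtain ⟨i, hi, hmax⟩ := Finset.exists_max_image c.support (fun i => o.toSyn (o.degree (f i)))
    (Finsupp.support_nonempty_iff.2 hne)
  have coeff_of_ne (j : ι) (hj : j ∈ c.support) (hji : j ≠ i) :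
      coeff (o.degree (f i)) (c j • f j) = 0 := by
    have hlt : o.degree (f j) ≺[o] o.degree (f i) := (hmax j hj).lt_of_ne fun h =>
      hji (hdeg (hc hj) (hc hi) (o.toSyn.injective h))
    rw [coeff_smul, o.coeff_eq_zero_of_lt hlt, smul_zero]
  have hcoeff : c i * coeff (o.degree (f i)) (f i) = 0 := by
    rw [← smul_eq_mul, ← coeff_smul, ← Finset.sum_eq_single_of_mem i hi coeff_of_ne, ← coeff_sum,
      ← coeff_zero (o.degree (f i)), ← hsum, Finsupp.linearCombination_apply, Finsupp.sum]
  exact mul_ne_zero (Finsupp.mem_support_iff.1 hi) (o.coeff_degree_ne_zero_iff.2 (hf i (hc hi)))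
    hcoeff

lemma degree_aeval_monomial_one (φ : σ → MvPolynomial τ R) {m : σ →₀ ℕ}
    (hφ : ∀ i ∈ m.support, φ i ≠ 0) :
    o.degree (aeval φ (monomial m (1 : R))) = m.sum fun i k => k • o.degree (φ i) := by
  rw [aeval_monomial, map_one, one_mul, Finsupp.prod,
    o.degree_prod fun i hi => pow_ne_zero _ (hφ i hi)]
  simp only [o.degree_pow, Finsupp.sum]

lemma disjoint_restrictSupport_ker_aeval [Nontrivial R] (φ : σ → MvPolynomial τ R)
    (S : Set (σ →₀ ℕ)) (hφ : ∀ m ∈ S, ∀ i ∈ m.support, φ i ≠ 0)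
    (hdeg : S.InjOn fun m => m.sum fun i k => k • o.degree (φ i)) :
    Disjoint (restrictSupport R S) (LinearMap.ker (aeval (R := R) φ).toLinearMap) := by
  have hindep : LinearIndepOn R (fun m => aeval φ (monomial m (1 : R))) S := by
    refine linearIndepOn_of_injOn_degree o _ S (fun m hm => ?_) (hdeg.congr fun m hm => ?_)
    · rw [aeval_monomial, map_one, one_mul]
      exact Finset.prod_ne_zero_iff.2 fun i hi => pow_ne_zero _ (hφ m hm i hi)
    · exact (degree_aeval_monomial_one o φ (hφ m hm)).symm
  rw [LinearMap.disjoint_ker]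
  intro g hg hzero
  have hsum : ∑ m ∈ g.support, coeff m g • aeval φ (monomial m (1 : R)) = 0 := by
    rw [← hzero, AlgHom.toLinearMap_apply]
    conv_rhs => rw [g.as_sum, map_sum]
    simp only [← map_smul, smul_eq_mul, mul_one]
  ext m
  by_cases hm : m ∈ g.support
  · exact linearIndepOn_iff'.1 hindep g.support (coeff · g) hg hsum m hm
  · exact notMem_support_iff.1 hm

end LeadingExponents

section Chains

variable {α β : Type*} [LinearOrder α] [LinearOrder β]

lemma map_eq_map_of_pairwise_le {γ δ : Type*} [Preorder γ] [PartialOrder δ] {l l' : List γ}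
    (hl : l.Pairwise (· ≤ ·)) (hl' : l'.Pairwise (· ≤ ·)) {f : γ → δ} (hf : Monotone f)
    (h : (l.map f).Perm (l'.map f)) : l.map f = l'.map f :=
  h.eq_of_pairwise' (r := (· ≤ ·)) (hl.map f fun _ _ hcd => hf hcd)
    (hl'.map f fun _ _ hcd => hf hcd)

lemma exists_pairwise_le_of_isChain {s : Multiset (α × β)} (hs : IsChain (· ≤ ·) {c | c ∈ s}) :
    ∃ l : List (α × β), (l : Multiset (α × β)) = s ∧ l.Pairwise (· ≤ ·) := by
  refine ⟨((s.map toLex).sort (· ≤ ·)).map ofLex, ?_, List.pairwise_map.2 ?_⟩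
  · rw [← Multiset.map_coe, Multiset.sort_eq, Multiset.map_map]
    exact Multiset.map_id s
  · refine ((s.map toLex).pairwise_sort (· ≤ ·)).imp_of_mem fun {c d} hc hd hlex => ?_
    simp only [Multiset.mem_sort, Multiset.mem_map] at hc hd
    obtain ⟨c, hc, rfl⟩ := hc
    obtain ⟨d, hd, rfl⟩ := hd
    rcases hs.total hc hd with h | h
    · exact h
    · exact (toLex.injective (hlex.antisymm (Prod.Lex.toLex_mono h))).le

lemma multiset_eq_of_isChain_of_map_eq {s t : Multiset (α × β)}
    (hs : IsChain (· ≤ ·) {c | c ∈ s}) (ht : IsChain (· ≤ ·) {c | c ∈ t})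
    (hfst : s.map Prod.fst = t.map Prod.fst) (hsnd : s.map Prod.snd = t.map Prod.snd) :
    s = t := by
  obtain ⟨l, rfl, hl⟩ := exists_pairwise_le_of_isChain hs
  obtain ⟨l', rfl, hl'⟩ := exists_pairwise_le_of_isChain ht
  have hfst' := map_eq_map_of_pairwise_le hl hl' monotone_fst (Multiset.coe_eq_coe.1 hfst)
  have hsnd' := map_eq_map_of_pairwise_le hl hl' monotone_snd (Multiset.coe_eq_coe.1 hsnd)
  rw [← List.zip_unzip l, ← List.zip_unzip l']
  simp only [List.unzip_fst, List.unzip_snd, hfst', hsnd']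

end Chains

section Minors

open scoped MonomialOrder

/-- The variables of a generic matrix with two rows and columns indexed by `α`: `false` marks the
top row, `true` the bottom row. In `MonomialOrder.lex` the smallest variable is the most
significant, so the dual order makes the bottom row, and in it the larger columns, lead. -/
abbrev MatrixVar (α : Type*) : Type _ := (Bool ×ₗ α)ᵒᵈ

/-- The variable in the top row and column `a`. -/
def topVar {α : Type*} (a : α) : MatrixVar α := OrderDual.toDual (toLex (false, a))

/-- The variable in the bottom row and column `a`. -/
def botVar {α : Type*} (a : α) : MatrixVar α := OrderDual.toDual (toLex (true, a))

/-- The minor on the columns `a`, `b` of the generic two-rowed matrix whose top row is scaled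
columnwise by `c`. Zeros in `c` produce the matrices with some vanishing top entries. -/
noncomputable def scaledMinor {α R : Type*} [CommRing R] (c : α → R) (a b : α) :
    MvPolynomial (MatrixVar α) R :=
  C (c a) * X (topVar a) * X (botVar b) - C (c b) * X (topVar b) * X (botVar a)

/-- The exponent of the diagonal term of the minor on the columns `a`, `b`. -/
noncomputable def diagonalExponent {α : Type*} (a b : α) : MatrixVar α →₀ ℕ :=
  Finsupp.single (topVar a) 1 + Finsupp.single (botVar b) 1

variable {α R : Type*}

lemma topVar_injective : Function.Injective (topVar : α → MatrixVar α) := fun a b h => by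
  simpa [topVar] using h

lemma botVar_injective : Function.Injective (botVar : α → MatrixVar α) := fun a b h => by
  simpa [botVar] using h

lemma topVar_ne_botVar (a b : α) : topVar a ≠ botVar b := by
  simp [topVar, botVar]

lemma scaledMinor_plucker [CommRing R] (c : α → R) (i j k l : α) :
    scaledMinor c i j * scaledMinor c k l - scaledMinor c i k * scaledMinor c j l
      + scaledMinor c i l * scaledMinor c j k = 0 := by
  unfold scaledMinor
  ring

lemma C_mul_X_topVar_mul_X_botVar [CommSemiring R] (c : R) (a b : α) :
    C c * X (topVar a) * X (botVar b) = monomial (diagonalExponent a b) c := by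
  simp [X, C_mul_monomial, monomial_mul, diagonalExponent]

variable [LinearOrder α] [WellFoundedLT α]

lemma diagonalExponent_swap_lt {a b : α} (hab : a < b) :
    diagonalExponent b a ≺[MonomialOrder.lex] diagonalExponent a b := by
  rw [MonomialOrder.lex_lt_iff, Finsupp.Lex.lt_iff]
  refine ⟨botVar b, fun v hv => ?_, ?_⟩
  · have hbot : botVar b ≠ v := hv.ne'
    have hbot' : botVar a ≠ v := by
      rintro rfl
      simp [botVar, Prod.Lex.toLex_lt_toLex, hab.not_gt] at hv
    have htop (d : α) : topVar d ≠ v := by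
      rintro rfl
      simp [topVar, botVar, Prod.Lex.toLex_lt_toLex, Bool.lt_iff] at hv
    simp [diagonalExponent, hbot, hbot', htop]
  · simp [diagonalExponent, topVar_ne_botVar, botVar_injective.eq_iff,
      hab.ne]

lemma degree_scaledMinor [CommRing R] {c : α → R} {a b : α} (hab : a < b) (hc : c a ≠ 0) :
    MonomialOrder.lex.degree (scaledMinor c a b) = diagonalExponent a b := by
  classical
  have hlead : MonomialOrder.lex.degree (monomial (diagonalExponent a b) (c a)) =
      diagonalExponent a b := by rw [MonomialOrder.degree_monomial, if_neg hc]
  rw [scaledMinor, C_mul_X_topVar_mul_X_botVar, C_mul_X_topVar_mul_X_botVar,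
    MonomialOrder.degree_sub_of_lt, hlead]
  rw [hlead]
  exact (MonomialOrder.degree_monomial_le _).trans_lt (diagonalExponent_swap_lt hab)

lemma scaledMinor_ne_zero [CommRing R] {c : α → R} {a b : α} (hab : a < b) (hc : c a ≠ 0) :
    scaledMinor c a b ≠ 0 := by
  refine MonomialOrder.lex.ne_zero_of_degree_ne_zero fun h => ?_
  rw [degree_scaledMinor hab hc] at h
  simpa [diagonalExponent] using DFunLike.congr_fun h (topVar a)

end Minors

section Coordinates

/-- The index set of the variables `_sT_{ij}`, without `T_∞`. -/
abbrev ColumnPair (r : ℕ) (n : Fin r → ℕ) : Type :=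
  Σ s : Fin r, {p : ℕ × ℕ // p.1 < p.2 ∧ p.2 ≤ n s + 2 ∧ p.1 ≤ n s}

/-- The index of the Plücker coordinate `_sT_{ij}`, where `T_∞` stands in for the missing
coordinate `_sT_{n_s+1,n_s+2}`. The value at any other invalid pair is junk. -/
def coordIdx {r : ℕ} (n : Fin r → ℕ) (s : Fin r) (i j : ℕ) : IdxX r n :=
  if h : i < j ∧ j ≤ n s + 2 ∧ i ≤ n s then some ⟨s, (i, j), h⟩ else none

/-- The Plücker relation on the columns `i`, `j`, `k`, `l` of block `s`; for `k = n_s + 1`,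
`l = n_s + 2` it is the twisted one. -/
noncomputable def pluckerRel (R : Type*) [CommRing R] {r : ℕ} (n : Fin r → ℕ) (s : Fin r)
    (i j k l : ℕ) : MvPolynomial (IdxX r n) R :=
  X (coordIdx n s i j) * X (coordIdx n s k l) - X (coordIdx n s i k) * X (coordIdx n s j l)
    + X (coordIdx n s i l) * X (coordIdx n s j k)

variable (K : Type*) [Field K] {r : ℕ} {n : Fin r → ℕ} {s : Fin r} {i j k l : ℕ}

lemma coordIdx_of_le (hij : i < j) (hj : j ≤ n s + 2) (hi : i ≤ n s) :
    coordIdx n s i j = some ⟨s, (i, j), hij, hj, hi⟩ := dif_pos _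

lemma coordIdx_of_lt (hi : n s < i) : coordIdx n s i j = none := dif_neg (by omega)

lemma T_eq_X_coordIdx (hij : i < j) (hj : j ≤ n s + 2) (hi : i ≤ n s) :
    T K r n s i j = X (coordIdx n s i j) := by
  rw [T, dif_pos ⟨hij, hj, hi⟩, coordIdx_of_le hij hj hi]

lemma pluckerRel_eq_of_le (hij : i < j) (hjk : j < k) (hkl : k < l) (hl : l ≤ n s + 2)
    (hk : k ≤ n s) :
    pluckerRel K n s i j k l = T K r n s i j * T K r n s k l - T K r n s i k * T K r n s j l
      + T K r n s i l * T K r n s j k := by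
  simp (disch := omega) only [pluckerRel, T_eq_X_coordIdx]

lemma pluckerRel_eq_twisted (hij : i < j) (hj : j ≤ n s) :
    pluckerRel K n s i j (n s + 1) (n s + 2) = T K r n s i j * Tinf K r n
      - T K r n s i (n s + 1) * T K r n s j (n s + 2)
      + T K r n s i (n s + 2) * T K r n s j (n s + 1) := by
  simp (disch := omega) only [pluckerRel, T_eq_X_coordIdx, Tinf, coordIdx_of_lt (i := n s + 1)]

variable (n) in
lemma IX_eq_span_pluckerRel :
    IX K r n = Ideal.span {x | ∃ s i j k l, i < j ∧ j < k ∧ k < l ∧ l ≤ n s + 2 ∧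
      x = pluckerRel K n s i j k l} := by
  refine congrArg Ideal.span (Set.ext fun x => exists_congr fun s => ⟨?_, ?_⟩)
  · rintro (⟨i, j, hij, hj, rfl⟩ | ⟨i, j, k, l, hij, hjk, hkl, hl, hk, rfl⟩)
    · exact ⟨i, j, n s + 1, n s + 2, hij, by omega, by omega, le_rfl,
        (pluckerRel_eq_twisted K hij hj).symm⟩
    · exact ⟨i, j, k, l, hij, hjk, hkl, hl, (pluckerRel_eq_of_le K hij hjk hkl hl hk).symm⟩
  · rintro ⟨i, j, k, l, hij, hjk, hkl, hl, rfl⟩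
    by_cases hk : k ≤ n s
    · exact Or.inr ⟨i, j, k, l, hij, hjk, hkl, hl, hk, pluckerRel_eq_of_le K hij hjk hkl hl hk⟩
    · obtain ⟨rfl, rfl⟩ : k = n s + 1 ∧ l = n s + 2 := by omega
      exact Or.inl ⟨i, j, hij, by omega, pluckerRel_eq_twisted K hij (by omega)⟩

end Coordinates

section Parametrization

/-- The indicator of the columns whose top entry is not forced to vanish. -/
def topScale (R : Type*) [CommRing R] {r : ℕ} (n : Fin r → ℕ) (a : Fin r ×ₗ ℕ) : R :=
  if (ofLex a).2 ≤ n (ofLex a).1 then 1 else 0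

/-- The columns of a variable `_sT_{ij}`. The lexicographic order on `Fin r ×ₗ ℕ` places the
blocks one after the other, so that column pairs of different blocks are always comparable. -/
def columns {r : ℕ} {n : Fin r → ℕ} (p : ColumnPair r n) : (Fin r ×ₗ ℕ) × (Fin r ×ₗ ℕ) :=
  (toLex (p.1, p.2.1.1), toLex (p.1, p.2.1.2))

/-- The parametrization of the zero locus of `I_X + ⟨T_∞⟩`, sending `T_∞` to `0` and `_sT_{ij}`
to a minor of block `s`. -/
noncomputable def minorParam (R : Type*) [CommRing R] {r : ℕ} (n : Fin r → ℕ) :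
    IdxX r n → MvPolynomial (MatrixVar (Fin r ×ₗ ℕ)) R
  | none => 0
  | some p => scaledMinor (topScale R n) (columns p).1 (columns p).2

variable (R : Type*) [CommRing R] {r : ℕ} {n : Fin r → ℕ}

lemma columns_injective : Function.Injective (columns : ColumnPair r n → _) := by
  rintro ⟨s, p⟩ ⟨t, q⟩ h
  simp only [columns, Prod.mk.injEq, toLex_inj] at h
  obtain ⟨⟨rfl, hfst⟩, -, hsnd⟩ := h
  exact congrArg _ (Subtype.ext (Prod.ext hfst hsnd))

lemma columns_fst_lt_snd (p : ColumnPair r n) : (columns p).1 < (columns p).2 :=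
  Prod.Lex.toLex_lt_toLex.2 (Or.inr ⟨rfl, p.2.2.1⟩)

lemma topScale_columns_fst_ne_zero [Nontrivial R] (p : ColumnPair r n) :
    topScale R n (columns p).1 ≠ 0 := by
  simp [topScale, columns, p.2.2.2.2]

lemma minorParam_coordIdx {s : Fin r} {i j : ℕ} (hij : i < j) (hj : j ≤ n s + 2) :
    minorParam R n (coordIdx n s i j) =
      scaledMinor (topScale R n) (toLex (s, i)) (toLex (s, j)) := by
  by_cases hi : i ≤ n s
  · rw [coordIdx_of_le hij hj hi]
    rfl
  · have hj' : ¬ j ≤ n s := by omega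
    rw [coordIdx_of_lt (by omega)]
    simp [minorParam, scaledMinor, topScale, hi, hj']

lemma IX_add_span_Tinf_le_ker (K : Type*) [Field K] (n : Fin r → ℕ) :
    IX K r n + Ideal.span {Tinf K r n} ≤ RingHom.ker (aeval (R := K) (minorParam K n)) := by
  refine sup_le ?_ ?_
  · rw [IX_eq_span_pluckerRel, Ideal.span_le]
    rintro _ ⟨s, i, j, k, l, hij, hjk, hkl, hl, rfl⟩
    have hvanish := scaledMinor_plucker (topScale K n) (toLex (s, i)) (toLex (s, j))
      (toLex (s, k)) (toLex (s, l))
    simp (disch := omega) only [← minorParam_coordIdx] at hvanish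
    simpa [pluckerRel, RingHom.mem_ker] using hvanish
  · rw [Ideal.span_le, Set.singleton_subset_iff]
    simp [RingHom.mem_ker, Tinf, minorParam]

end Parametrization

section StandardMonomials

/-- A monomial is standard if it is free of `T_∞` and its column pairs form a chain for the
componentwise order, that is, no two column pairs of a block are strictly nested. -/
def IsStandard {r : ℕ} {n : Fin r → ℕ} (m : IdxX r n →₀ ℕ) : Prop :=
  m none = 0 ∧ IsChain (· ≤ ·) (columns '' (m.some.support : Set (ColumnPair r n)))

/-- The exponent of the leading monomial of the image of a `T_∞`-free monomial. -/
noncomputable def leadingExponent {r : ℕ} {n : Fin r → ℕ} (m : ColumnPair r n →₀ ℕ) :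
    MatrixVar (Fin r ×ₗ ℕ) →₀ ℕ :=
  m.sum fun p k => k • diagonalExponent (columns p).1 (columns p).2

variable (R : Type*) [CommRing R] {r : ℕ} {n : Fin r → ℕ}

lemma leadingExponent_eq_mapDomain (m : ColumnPair r n →₀ ℕ) :
    leadingExponent m = (m.mapDomain fun p => (columns p).1).mapDomain topVar +
      (m.mapDomain fun p => (columns p).2).mapDomain botVar := by
  simp only [← Finsupp.mapDomain_comp]
  simp [leadingExponent, diagonalExponent, Finsupp.mapDomain, Finsupp.sum_add]

lemma leadingExponent_topVar (m : ColumnPair r n →₀ ℕ) (a : Fin r ×ₗ ℕ) :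
    leadingExponent m (topVar a) = m.mapDomain (fun p => (columns p).1) a := by
  rw [leadingExponent_eq_mapDomain, Finsupp.add_apply, Finsupp.mapDomain_apply topVar_injective,
    Finsupp.mapDomain_of_notMem_range (f := botVar) _ _ fun ⟨b, h⟩ => topVar_ne_botVar a b h.symm,
    add_zero]

lemma leadingExponent_botVar (m : ColumnPair r n →₀ ℕ) (a : Fin r ×ₗ ℕ) :
    leadingExponent m (botVar a) = m.mapDomain (fun p => (columns p).2) a := by
  rw [leadingExponent_eq_mapDomain, Finsupp.add_apply, Finsupp.mapDomain_apply botVar_injective,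
    Finsupp.mapDomain_of_notMem_range (f := topVar) _ _ fun ⟨b, h⟩ => topVar_ne_botVar b a h,
    zero_add]

lemma IsStandard.eq_of_leadingExponent_eq {m m' : IdxX r n →₀ ℕ} (hm : IsStandard m)
    (hm' : IsStandard m') (h : leadingExponent m.some = leadingExponent m'.some) : m = m' := by
  have chain {m : IdxX r n →₀ ℕ} (hm : IsStandard m) :
      IsChain (· ≤ ·) {c | c ∈ (Finsupp.toMultiset m.some).map columns} := by
    convert hm.2
    ext c
    simp
  have hfst : m.some.mapDomain (fun p => (columns p).1) =
      m'.some.mapDomain (fun p => (columns p).1) := by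
    ext a
    simpa only [leadingExponent_topVar] using DFunLike.congr_fun h (topVar a)
  have hsnd : m.some.mapDomain (fun p => (columns p).2) =
      m'.some.mapDomain (fun p => (columns p).2) := by
    ext a
    simpa only [leadingExponent_botVar] using DFunLike.congr_fun h (botVar a)
  have hcolumns : (Finsupp.toMultiset m.some).map columns =
      (Finsupp.toMultiset m'.some).map columns := by
    refine multiset_eq_of_isChain_of_map_eq (chain hm) (chain hm') ?_ ?_
    · rw [Multiset.map_map, Multiset.map_map, Finsupp.toMultiset_map, Finsupp.toMultiset_map]
      exact congrArg Finsupp.toMultiset hfst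
    · rw [Multiset.map_map, Multiset.map_map, Finsupp.toMultiset_map, Finsupp.toMultiset_map]
      exact congrArg Finsupp.toMultiset hsnd
  have hsome : m.some = m'.some :=
    Finsupp.orderIsoMultiset.injective (Multiset.map_injective columns_injective hcolumns)
  rw [← m.optionElim_some, ← m'.optionElim_some, hsome, hm.1, hm'.1]

lemma sum_degree_minorParam [Nontrivial R] {m : IdxX r n →₀ ℕ} (hm : m none = 0) :
    (m.sum fun x k => k • MonomialOrder.lex.degree (minorParam R n x)) =
      leadingExponent m.some := by
  rw [Finsupp.sum_option_index _ _ (by simp) (by simp [add_smul]), hm, zero_smul, zero_add]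
  refine Finsupp.sum_congr fun p _ => ?_
  rw [minorParam, degree_scaledMinor (columns_fst_lt_snd p) (topScale_columns_fst_ne_zero R p)]

variable (n) in
lemma disjoint_restrictSupport_isStandard_ker [IsDomain R] :
    Disjoint (restrictSupport R {m | IsStandard m})
      (LinearMap.ker (aeval (R := R) (minorParam R n)).toLinearMap) := by
  refine disjoint_restrictSupport_ker_aeval MonomialOrder.lex _ _ ?_ ?_
  · rintro m hm (_ | p) hx
    · exact absurd hm.1 (Finsupp.mem_support_iff.1 hx)
    · exact scaledMinor_ne_zero (columns_fst_lt_snd p) (topScale_columns_fst_ne_zero R p)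
  · intro m hm m' hm' h
    simp only [sum_degree_minorParam R hm.1, sum_degree_minorParam R hm'.1] at h
    exact hm.eq_of_leadingExponent_eq hm' h

end StandardMonomials

section Rewriting

/-- The squared width `(j - i) ^ 2` of a coordinate `_sT_{ij}`, with `T_∞` read as
`_sT_{n_s+1,n_s+2}`. Strict convexity makes the Plücker relations decrease its sum over a
monomial. -/
def sqWidth {r : ℕ} {n : Fin r → ℕ} : IdxX r n → ℕ
  | none => 1
  | some p => (p.2.1.2 - p.2.1.1) ^ 2

variable (K : Type*) [Field K] {r : ℕ} {n : Fin r → ℕ} {s : Fin r} {i j k l : ℕ}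

lemma sqWidth_coordIdx (hij : i < j) (hj : j ≤ n s + 2) :
    sqWidth (coordIdx n s i j) = (j - i) ^ 2 := by
  by_cases hi : i ≤ n s
  · rw [coordIdx_of_le hij hj hi]
    rfl
  · obtain ⟨rfl, rfl⟩ : i = n s + 1 ∧ j = n s + 2 := by omega
    rw [coordIdx_of_lt (by omega)]
    simp [sqWidth]

lemma sq_add_sq_lt_of_crossing (hij : i < j) (hjk : j < k) (hkl : k < l) :
    (k - i) ^ 2 + (l - j) ^ 2 < (l - i) ^ 2 + (k - j) ^ 2 := by
  zify [hij.le, hjk.le, hkl.le, (hij.trans hjk).le, (hjk.trans hkl).le,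
    ((hij.trans hjk).trans hkl).le] at *
  nlinarith

lemma sq_add_sq_lt_of_disjoint (hij : i < j) (hjk : j < k) (hkl : k < l) :
    (j - i) ^ 2 + (l - k) ^ 2 < (l - i) ^ 2 + (k - j) ^ 2 := by
  zify [hij.le, hjk.le, hkl.le, (hij.trans hjk).le, (hjk.trans hkl).le,
    ((hij.trans hjk).trans hkl).le] at *
  nlinarith

lemma nested_of_columns_incomparable {p q : ColumnPair r n} (hpq : ¬ columns p ≤ columns q)
    (hqp : ¬ columns q ≤ columns p) :
    p.1 = q.1 ∧ (p.2.1.1 < q.2.1.1 ∧ q.2.1.2 < p.2.1.2 ∨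
      q.2.1.1 < p.2.1.1 ∧ p.2.1.2 < q.2.1.2) := by
  simp only [columns, Prod.mk_le_mk, Prod.Lex.toLex_le_toLex] at hpq hqp
  omega

lemma exists_nested_le_of_not_isStandard {m : IdxX r n →₀ ℕ} (hnone : m none = 0)
    (hm : ¬ IsStandard m) :
    ∃ s i j k l, i < j ∧ j < k ∧ k < l ∧ l ≤ n s + 2 ∧
      Finsupp.single (coordIdx n s i l) 1 + Finsupp.single (coordIdx n s j k) 1 ≤ m := by
  have of_nested {s : Fin r} {i j k l : ℕ} (hil : i < l ∧ l ≤ n s + 2 ∧ i ≤ n s)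
      (hjk : j < k ∧ k ≤ n s + 2 ∧ j ≤ n s) (hp : m (some ⟨s, (i, l), hil⟩) ≠ 0)
      (hq : m (some ⟨s, (j, k), hjk⟩) ≠ 0) (hij : i < j) (hkl : k < l) :
      ∃ s i j k l, i < j ∧ j < k ∧ k < l ∧ l ≤ n s + 2 ∧
        Finsupp.single (coordIdx n s i l) 1 + Finsupp.single (coordIdx n s j k) 1 ≤ m := by
    refine ⟨s, i, j, k, l, hij, hjk.1, hkl, hil.2.1, ?_⟩
    rw [coordIdx_of_le hil.1 hil.2.1 hil.2.2, coordIdx_of_le hjk.1 hjk.2.1 hjk.2.2]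
    exact single_add_single_le (by simp [hij.ne]) hp hq
  have hchain : ¬ IsChain (· ≤ ·) (columns '' (m.some.support : Set (ColumnPair r n))) :=
    fun h => hm ⟨hnone, h⟩
  simp only [IsChain, Set.Pairwise, Set.forall_mem_image, not_forall, not_or] at hchain
  obtain ⟨⟨s, ⟨i, l⟩, hil⟩, hp, ⟨t, ⟨j, k⟩, hjk⟩, hq, -, hpq, hqp⟩ := hchain
  simp only [Finset.mem_coe, Finsupp.mem_support_iff, Finsupp.some_apply] at hp hq
  obtain ⟨rfl, ⟨hij, hkl⟩ | ⟨hji, hlk⟩⟩ := nested_of_columns_incomparable hpq hqp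
  · exact of_nested hil hjk hp hq hij hkl
  · exact of_nested hjk hil hq hp hji hlk

lemma monomial_mem_of_nested_le {m : IdxX r n →₀ ℕ} (hij : i < j) (hjk : j < k) (hkl : k < l)
    (hl : l ≤ n s + 2)
    (hm : Finsupp.single (coordIdx n s i l) 1 + Finsupp.single (coordIdx n s j k) 1 ≤ m) :
    monomial m 1 ∈ (IX K r n).restrictScalars K ⊔
      restrictSupport K {m' | Finsupp.weight sqWidth m' < Finsupp.weight sqWidth m} := by
  obtain ⟨d, rfl⟩ := le_iff_exists_add.1 hm
  set V := restrictSupport K {m' | Finsupp.weight sqWidth m' < Finsupp.weight sqWidth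
    (Finsupp.single (coordIdx n s i l) 1 + Finsupp.single (coordIdx n s j k) 1 + d)}
  have smaller_mem {x y : IdxX r n} (hxy : sqWidth x + sqWidth y <
      sqWidth (coordIdx n s i l) + sqWidth (coordIdx n s j k)) :
      X x * X y * monomial d (1 : K) ∈ V := by
    rw [← monomial_single_add_single_add, monomial_mem_restrictSupport]
    left
    simpa [Finsupp.weight_single] using hxy
  have hcrossing : X (coordIdx n s i k) * X (coordIdx n s j l) * monomial d (1 : K) ∈ V := by
    refine smaller_mem ?_
    simp (disch := omega) only [sqWidth_coordIdx, sq_add_sq_lt_of_crossing hij hjk hkl]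
  have hdisjoint : X (coordIdx n s i j) * X (coordIdx n s k l) * monomial d (1 : K) ∈ V := by
    refine smaller_mem ?_
    simp (disch := omega) only [sqWidth_coordIdx, sq_add_sq_lt_of_disjoint hij hjk hkl]
  have hrel : pluckerRel K n s i j k l ∈ IX K r n := by
    rw [IX_eq_span_pluckerRel]
    exact Ideal.subset_span ⟨s, i, j, k, l, hij, hjk, hkl, hl, rfl⟩
  rw [monomial_single_add_single_add, Submodule.mem_sup]
  refine ⟨_, Ideal.mul_mem_right (monomial d 1) _ hrel, _, sub_mem hcrossing hdisjoint, ?_⟩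
  rw [pluckerRel]
  ring

lemma monomial_mem_span_Tinf {m : IdxX r n →₀ ℕ} (hm : m none ≠ 0) :
    monomial m 1 ∈ Ideal.span {Tinf K r n} := by
  rw [Ideal.mem_span_singleton, Tinf, X, monomial_dvd_monomial]
  simpa [Finsupp.single_le_iff, Nat.one_le_iff_ne_zero] using hm

variable (n) in
lemma restrictScalars_sup_restrictSupport_isStandard_eq_top :
    (IX K r n + Ideal.span {Tinf K r n}).restrictScalars K ⊔
      restrictSupport K {m | IsStandard m} = ⊤ := by
  refine sup_restrictSupport_eq_top_of_straightening _ _ (Finsupp.weight sqWidth) fun m hm => ?_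
  by_cases hnone : m none = 0
  · obtain ⟨s, i, j, k, l, hij, hjk, hkl, hl, hle⟩ := exists_nested_le_of_not_isStandard hnone hm
    have IX_le : (IX K r n).restrictScalars K ≤
        (IX K r n + Ideal.span {Tinf K r n}).restrictScalars K := fun _ h => Ideal.mem_sup_left h
    exact sup_le_sup_right IX_le _ (monomial_mem_of_nested_le K hij hjk hkl hl hle)
  · exact Submodule.mem_sup_left (Ideal.mem_sup_right (monomial_mem_span_Tinf K hnone))

variable (n) in
theorem IX_add_span_Tinf_eq_ker :
    IX K r n + Ideal.span {Tinf K r n} = RingHom.ker (aeval (R := K) (minorParam K n)) := by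
  have hdisjoint := disjoint_restrictSupport_isStandard_ker K n
  have htop := restrictScalars_sup_restrictSupport_isStandard_eq_top K n
  refine Submodule.restrictScalars_injective K _ _ (eq_of_le_of_inf_le_of_sup_le
    (z := restrictSupport K {m | IsStandard m}) (IX_add_span_Tinf_le_ker K n) ?_ ?_)
  · exact hdisjoint.symm.le_bot.trans bot_le
  · exact le_top.trans htop.ge

end Rewriting

end TwistedPlucker

theorem stmt11_general (K : Type*) [Field K] (r : ℕ) (n : Fin r → ℕ) :
    (IX K r n + Ideal.span {Tinf K r n}).IsPrime := by
  rw [TwistedPlucker.IX_add_span_Tinf_eq_ker]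
  exact RingHom.ker_isPrime _

/-- The ideal `I_X + ⟨T_∞⟩` is a prime ideal of `R_X`. -/
theorem stmt11 (K : Type*) [Field K] [IsAlgClosed K]
    (r : ℕ) (hr : 1 ≤ r) (n : Fin r → ℕ) (hn : ∀ s, 1 ≤ n s) :
    (IX K r n + Ideal.span {Tinf K r n}).IsPrime :=
  stmt11_general K r n
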